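/- Let Γ₄ be the 4-cycle on consecutive vertices x₁, x₂, x₃, x₄, with whiskers x₁y₁ and x₂y₂ attached, in the polynomial ring R = k[x₁, x₂, x₃, x₄, y₁, y₂]. Then the edge ideal (x₁x₂, x₂x₃, x₃x₄, x₄x₁, x₁y₁, x₂y₂) equals the radical of the ideal generated by the three elements x₁x₂, x₁x₄ + x₂x₃, and x₃x₄ + x₁y₁ + x₂y₂. -/

import Mathlib

open MvPolynomial

/-- If setting the variables in `S` to zero kills `f`, then every monomial of `f` involves
a variable of `S`. -/
lemma support_of_kill {k : Type*} [Field k] (S : Finset (Fin 6)) (f : MvPolynomial (Fin 6) k)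
    (hf : aeval (fun i => if i ∈ S then (0 : MvPolynomial (Fin 6) k) else X i) f = 0) :
    ∀ m ∈ f.support, ∃ i ∈ S, (m : Fin 6 →₀ ℕ) i ≠ 0 := by
  have key : f ∈ Ideal.span (X '' (S : Set (Fin 6)) : Set (MvPolynomial (Fin 6) k)) := by
    set P := Ideal.span (X '' (S : Set (Fin 6)) : Set (MvPolynomial (Fin 6) k)) with hP
    have h : (Ideal.Quotient.mkₐ k P).comp
        (aeval (fun i => if i ∈ S then (0 : MvPolynomial (Fin 6) k) else X i)) =
        Ideal.Quotient.mkₐ k P := by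
      apply MvPolynomial.algHom_ext
      intro i
      rw [AlgHom.comp_apply, aeval_X]
      split_ifs with hi
      · rw [map_zero, Ideal.Quotient.mkₐ_eq_mk, eq_comm, Ideal.Quotient.eq_zero_iff_mem]
        exact Ideal.subset_span ⟨i, hi, rfl⟩
      · rfl
    have h2 := DFunLike.congr_fun h f
    rw [AlgHom.comp_apply, hf, map_zero, Ideal.Quotient.mkₐ_eq_mk, eq_comm,
      Ideal.Quotient.eq_zero_iff_mem] at h2
    exact h2
  simpa using mem_ideal_span_X_image.1 key

/-- A monomial whose exponents at `i ≠ j` are nonzero dominates the edge monomial. -/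
lemma edge_le {i j : Fin 6} (hij : i ≠ j) {m : Fin 6 →₀ ℕ} (hi : m i ≠ 0) (hj : m j ≠ 0) :
    Finsupp.single i 1 + Finsupp.single j 1 ≤ m := by
  intro l
  simp only [Finsupp.add_apply, Finsupp.single_apply]
  split_ifs with h1 h2 h2
  · exact absurd (h1.trans h2.symm) hij
  · subst h1; omega
  · subst h2; omega
  · omega

/-- For the 4-cycle `x₁x₂x₃x₄` with whiskers `x₁y₁` and `x₂y₂` (variables
`x₁,…,x₄,y₁,y₂` being `X 0,…,X 3, X 4, X 5`), the edge ideal equals the radical of the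
ideal generated by `x₁x₂`, `x₁x₄ + x₂x₃` and `x₃x₄ + x₁y₁ + x₂y₂`. -/
theorem stmt_9 (k : Type*) [Field k] :
    Ideal.span ({X 0 * X 1, X 1 * X 2, X 2 * X 3, X 3 * X 0, X 0 * X 4, X 1 * X 5} :
        Set (MvPolynomial (Fin 6) k)) =
      (Ideal.span ({X 0 * X 1, X 0 * X 3 + X 1 * X 2, X 2 * X 3 + X 0 * X 4 + X 1 * X 5} :
        Set (MvPolynomial (Fin 6) k))).radical := by
  apply le_antisymm
  · rw [Ideal.radical_eq_sInf]
    refine le_sInf ?_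
    rintro P ⟨hJ, hP⟩
    rw [Ideal.span_le] at hJ
    have h1 : (X 0 * X 1 : MvPolynomial (Fin 6) k) ∈ P := hJ (by simp)
    have h2 : (X 0 * X 3 + X 1 * X 2 : MvPolynomial (Fin 6) k) ∈ P := hJ (by simp)
    have h3 : (X 2 * X 3 + X 0 * X 4 + X 1 * X 5 : MvPolynomial (Fin 6) k) ∈ P := hJ (by simp)
    have goal : (X 1 * X 2 : MvPolynomial (Fin 6) k) ∈ P ∧
        (X 2 * X 3 : MvPolynomial (Fin 6) k) ∈ P ∧ (X 3 * X 0 : MvPolynomial (Fin 6) k) ∈ P ∧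
        (X 0 * X 4 : MvPolynomial (Fin 6) k) ∈ P ∧ (X 1 * X 5 : MvPolynomial (Fin 6) k) ∈ P := by
      simp only [← Ideal.Quotient.eq_zero_iff_mem, map_add, map_mul] at h1 h2 h3 ⊢
      have := hP
      rcases mul_eq_zero.1 h1 with h | h
      · simp only [h, zero_mul, zero_add, add_zero, mul_eq_zero] at h2 h3 ⊢
        rcases h2 with h' | h' <;> simp_all
      · simp only [h, zero_mul, zero_add, add_zero, mul_eq_zero] at h2 h3 ⊢
        rcases h2 with h' | h' <;> simp_all
    obtain ⟨g1, g2, g3, g4, g5⟩ := goal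
    rw [Ideal.span_le]
    rintro f (rfl | rfl | rfl | rfl | rfl | rfl) <;> assumption
  · rintro f ⟨n, hn⟩
    have kill : ∀ S : Finset (Fin 6),
        (∀ g ∈ ({X 0 * X 1, X 0 * X 3 + X 1 * X 2, X 2 * X 3 + X 0 * X 4 + X 1 * X 5} :
          Set (MvPolynomial (Fin 6) k)),
          aeval (fun i => if i ∈ S then (0 : MvPolynomial (Fin 6) k) else X i) g = 0) →
        ∀ m ∈ f.support, ∃ i ∈ S, (m : Fin 6 →₀ ℕ) i ≠ 0 := by
      intro S hS
      apply support_of_kill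
      have hle : Ideal.span ({X 0 * X 1, X 0 * X 3 + X 1 * X 2,
          X 2 * X 3 + X 0 * X 4 + X 1 * X 5} : Set (MvPolynomial (Fin 6) k)) ≤
          RingHom.ker (aeval (R := k)
            (fun i => if i ∈ S then (0 : MvPolynomial (Fin 6) k) else X i)) :=
        Ideal.span_le.2 fun g hg => hS g hg
      have h0 := hle hn
      rw [RingHom.mem_ker, map_pow] at h0
      exact eq_zero_of_pow_eq_zero h0
    have k1 := kill {0, 1, 2} (by simp)
    have k2 := kill {0, 1, 3} (by simp)
    have k3 := kill {0, 2, 5} (by simp)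
    have k4 := kill {1, 3, 4} (by simp)
    have hI : ({X 0 * X 1, X 1 * X 2, X 2 * X 3, X 3 * X 0, X 0 * X 4, X 1 * X 5} :
        Set (MvPolynomial (Fin 6) k)) = (fun s => monomial s (1 : k)) ''
        {Finsupp.single 0 1 + Finsupp.single 1 1, Finsupp.single 1 1 + Finsupp.single 2 1,
          Finsupp.single 2 1 + Finsupp.single 3 1, Finsupp.single 3 1 + Finsupp.single 0 1,
          Finsupp.single 0 1 + Finsupp.single 4 1, Finsupp.single 1 1 + Finsupp.single 5 1} := by
      simp only [Set.image_insert_eq, Set.image_singleton, X, monomial_mul, mul_one]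
    rw [hI, mem_ideal_span_monomial_image]
    intro m hm
    replace k1 := k1 m hm
    replace k2 := k2 m hm
    replace k3 := k3 m hm
    replace k4 := k4 m hm
    simp only [Finset.mem_insert, Finset.mem_singleton, exists_eq_or_imp, exists_eq_left]
      at k1 k2 k3 k4
    simp only [Set.mem_insert_iff, Set.mem_singleton_iff, exists_eq_or_imp, exists_eq_left]
    have e1 := @edge_le 0 1 (by decide) m
    have e2 := @edge_le 1 2 (by decide) m
    have e3 := @edge_le 2 3 (by decide) m
    have e4 := @edge_le 3 0 (by decide) m
    have e5 := @edge_le 0 4 (by decide) m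
    have e6 := @edge_le 1 5 (by decide) m
    clear kill hI hm hn
    rcases k1 with a | a | a <;> rcases k2 with b | b | b <;> rcases k3 with c | c | c <;>
      rcases k4 with d | d | d <;>
      first
      | exact Or.inl (e1 (by assumption) (by assumption))
      | exact Or.inr (Or.inl (e2 (by assumption) (by assumption)))
      | exact Or.inr (Or.inr (Or.inl (e3 (by assumption) (by assumption))))
      | exact Or.inr (Or.inr (Or.inr (Or.inl (e4 (by assumption) (by assumption)))))
      | exact Or.inr (Or.inr (Or.inr (Or.inr (Or.inl (e5 (by assumption) (by assumption))))))
      | exact Or.inr (Or.inr (Or.inr (Or.inr (Or.inr (e6 (by assumption) (by assumption))))))
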